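/- Fix an integer k ≥ 416. Let G be a finite simple graph, L a 10-assignment for G, and α, β two L-colorings of G. Suppose G contains three distinct vertices a, b, c with ab and ac edges of G and d_G(a) = d_G(b) = d_G(c) = 5. Let S = {a, b, c}. If there exists a k-good recoloring sequence in G − S from the restriction of α to G − S to the restriction of β to G − S, then there exists a k-good recoloring sequence in G from α to β. -/

import Mathlib

def IsLColoring {V : Type} (G : SimpleGraph V) (L : V → Finset ℕ) (φ : V → ℕ) : Prop :=
  (∀ v, φ v ∈ L v) ∧ ∀ ⦃u w : V⦄, G.Adj u w → φ u ≠ φ w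

def recolorCount {V : Type} {m : ℕ} (φ : Fin (m + 1) → V → ℕ) (v : V) : ℕ :=
  (Finset.univ.filter fun i : Fin m => φ i.castSucc v ≠ φ i.succ v).card

def IsRecolSeq {V : Type} (G : SimpleGraph V) (L : V → Finset ℕ) {m : ℕ}
    (φ : Fin (m + 1) → V → ℕ) (α β : V → ℕ) : Prop :=
  φ 0 = α ∧ φ (Fin.last m) = β ∧ (∀ i, IsLColoring G L (φ i)) ∧
    ∀ i : Fin m, ∃! v : V, φ i.castSucc v ≠ φ i.succ v

/-!
Replay the recoloring of `G - S` and recolor a vertex of `S` only when one of its neighbors is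
about to receive its color, the new color being one that its neighbors receive as late as possible.
Let vertices of `S` have degree at most `d + 1` and lists of size at least `2 * d + 2` (here
`d = 4`); then the new color can avoid the colors of all neighbors and the next `d` colors coming up
around the vertex.

The center `a` sees at most `(d - 1) * k` moves outside `S`, so it is recolored about
`(d - 1) * k / d` times and has many recolorings to spare. An end `b` or `c` sees up to `d * k`
moves, which leaves no room for the last moves to its target color. Hence each of its first
`2 * d + 2` recolorings ignores the color of `a`, moving `a` away if necessary: this lets it look
`d + 1` colors ahead and saves two recolorings in total, at a cost to `a` that is independent of
`k`.
-/

open Function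

section RecolorPath

variable {V : Type} {G : SimpleGraph V} {L : V → Finset ℕ} {φ ψ α β : V → ℕ} {v : V} {q : ℕ}

/-- The color `q` of the list of `v` appears on no neighbor of `v`, so that `v` may receive it
(`q` may be the current color of `v`). -/
def IsFree (G : SimpleGraph V) (L : V → Finset ℕ) (φ : V → ℕ) (v : V) (q : ℕ) : Prop :=
  q ∈ L v ∧ ∀ w, G.Adj v w → φ w ≠ q

theorem IsLColoring.isFree (hβ : IsLColoring G L β)
    (h : ∀ w, G.Adj v w → φ w = β w ∨ φ w ≠ β v) : IsFree G L φ v (β v) :=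
  ⟨hβ.1 v, fun w hw => (h w hw).elim (fun e => e ▸ (hβ.2 hw).symm) id⟩

theorem exists_mem_list_avoiding (φ : V → ℕ) (s : Finset V) (F : Finset ℕ)
    (h : s.card + F.card < (L v).card) : ∃ q ∈ L v, q ∉ F ∧ ∀ w ∈ s, φ w ≠ q := by
  have hcard : (s.image φ ∪ F).card < (L v).card :=
    ((Finset.card_union_le _ _).trans (Nat.add_le_add_right Finset.card_image_le _)).trans_lt h
  obtain ⟨q, hqL, hq⟩ := Finset.exists_mem_notMem_of_card_lt_card hcard
  simp only [Finset.mem_union, Finset.mem_image, not_or, not_exists, not_and] at hq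
  exact ⟨q, hqL, hq.2, hq.1⟩

theorem exists_isFree_notMem [Fintype (G.neighborSet v)] (φ : V → ℕ) (F : Finset ℕ)
    (h : G.degree v + F.card < (L v).card) : ∃ q, IsFree G L φ v q ∧ q ∉ F := by
  obtain ⟨q, hqL, hqF, hq⟩ := exists_mem_list_avoiding φ (G.neighborFinset v) F h
  exact ⟨q, ⟨hqL, fun w hw => hq w ((G.mem_neighborFinset v w).2 hw)⟩, hqF⟩

theorem card_toFinset_take_le (e : List ℕ) (t : ℕ) : (e.take t).toFinset.card ≤ t :=
  (List.toFinset_card_le _).trans (List.length_take_le _ _)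

theorem exists_isFree_notMem_take [Fintype (G.neighborSet v)] (φ : V → ℕ) (e : List ℕ) {d : ℕ}
    (h : G.degree v + d < (L v).card) : ∃ q, IsFree G L φ v q ∧ q ∉ e.take d := by
  obtain ⟨q, hq, hqe⟩ := exists_isFree_notMem φ (e.take d).toFinset
    ((Nat.add_le_add_left (card_toFinset_take_le e d) _).trans_lt h)
  exact ⟨q, hq, by simpa using hqe⟩

theorem isRecolSeq_succ_iff {m : ℕ} {φ : Fin (m + 2) → V → ℕ} :
    IsRecolSeq G L φ α β ↔ φ 0 = α ∧ IsLColoring G L α ∧ (∃! v, α v ≠ φ 1 v) ∧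
      IsRecolSeq G L (Fin.tail φ) (φ 1) β := by
  simp only [IsRecolSeq, Fin.tail, Fin.forall_fin_succ (n := m + 1), Fin.forall_fin_succ (n := m),
    Fin.castSucc_zero, Fin.succ_zero_eq_one, Fin.succ_last, Fin.castSucc_succ]
  constructor
  · rintro ⟨rfl, rfl, ⟨h0, hc⟩, hv, hs⟩
    exact ⟨rfl, h0, hv, trivial, rfl, hc, hs⟩
  · rintro ⟨rfl, h0, hv, -, rfl, hc, hs⟩
    exact ⟨rfl, rfl, ⟨h0, hc⟩, hv, hs⟩

variable [DecidableEq V]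

theorem IsLColoring.update (hφ : IsLColoring G L φ) (hq : IsFree G L φ v q) :
    IsLColoring G L (update φ v q) := by
  refine ⟨fun w => ?_, fun u w huw => ?_⟩
  · rcases eq_or_ne w v with rfl | hw
    · simpa using hq.1
    · simpa [hw] using hφ.1 w
  · rcases eq_or_ne u v with rfl | hu
    · simpa [huw.ne'] using (hq.2 w huw).symm
    · rcases eq_or_ne w v with rfl | hw
      · simpa [hu] using hq.2 u huw.symm
      · simpa [hu, hw] using hφ.2 huw

theorem existsUnique_ne_iff_exists_update :
    (∃! v, φ v ≠ ψ v) ↔ ∃ v q, q ≠ φ v ∧ ψ = update φ v q := by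
  constructor
  · rintro ⟨v, hv, huniq⟩
    exact ⟨v, ψ v, hv.symm, eq_update_iff.2 ⟨rfl, fun w hw => by_contra fun h =>
      hw (huniq w (Ne.symm h))⟩⟩
  · rintro ⟨v, q, hq, rfl⟩
    refine ⟨v, by simpa using hq.symm, fun w hw => by_contra fun hwv => hw ?_⟩
    rw [update_of_ne hwv]

/-- A recoloring sequence from one coloring to another, presented by the list of its moves: the
move `(v, q)` gives `v` the new color `q`. -/
inductive RecolorPath (G : SimpleGraph V) (L : V → Finset ℕ) :
    (V → ℕ) → List (V × ℕ) → (V → ℕ) → Prop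
  | nil (φ : V → ℕ) : RecolorPath G L φ [] φ
  | cons {φ ψ : V → ℕ} {v : V} {q : ℕ} {l : List (V × ℕ)} (hq : IsFree G L φ v q)
      (hne : q ≠ φ v) (h : RecolorPath G L (update φ v q) l ψ) :
      RecolorPath G L φ ((v, q) :: l) ψ

/-- The number of times a list of moves recolors `v`. -/
def moveCount (l : List (V × ℕ)) (v : V) : ℕ := (l.map Prod.fst).count v

theorem moveCount_cons (v : V) (q : ℕ) (l : List (V × ℕ)) :
    moveCount ((v, q) :: l) = Pi.single v 1 + moveCount l := by
  ext w
  rcases eq_or_ne w v with rfl | hw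
  · simp [moveCount, add_comm]
  · simp [moveCount, hw, hw.symm]

theorem moveCount_concat (l : List (V × ℕ)) (v : V) (q : ℕ) :
    moveCount (l ++ [(v, q)]) = moveCount l + Pi.single v 1 := by
  ext w
  rcases eq_or_ne w v with rfl | hw
  · simp [moveCount]
  · simp [moveCount, hw, hw.symm]

theorem moveCount_filter_le (p : V × ℕ → Bool) (l : List (V × ℕ)) (v : V) :
    moveCount (l.filter p) v ≤ moveCount l v :=
  (List.filter_sublist.map Prod.fst).count_le v

theorem RecolorPath.concat {l : List (V × ℕ)} (h : RecolorPath G L φ l ψ)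
    (hq : IsFree G L ψ v q) (hne : q ≠ ψ v) :
    RecolorPath G L φ (l ++ [(v, q)]) (update ψ v q) := by
  induction h with
  | nil φ => exact .cons hq hne (.nil _)
  | cons hq' hne' _ ih => exact .cons hq' hne' (ih hq hne)

theorem RecolorPath.exists_recolor {l : List (V × ℕ)} (h : RecolorPath G L φ l ψ)
    (hq : IsFree G L ψ v q) :
    ∃ l', RecolorPath G L φ l' (update ψ v q) ∧ moveCount l' ≤ moveCount l + Pi.single v 1 := by
  rcases eq_or_ne q (ψ v) with rfl | hne
  · exact ⟨l, by rwa [update_eq_self], le_self_add⟩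
  · exact ⟨_, h.concat hq hne, (moveCount_concat l v q).le⟩

theorem recolorCount_succ {m : ℕ} {φ : Fin (m + 2) → V → ℕ} (hq : q ≠ φ 0 v)
    (h : φ 1 = update (φ 0) v q) :
    recolorCount φ = Pi.single v 1 + recolorCount (Fin.tail φ) := by
  ext w
  have hsplit : recolorCount φ w =
      (if φ 0 w ≠ φ 1 w then 1 else 0) + recolorCount (Fin.tail φ) w := by
    simp only [recolorCount, Finset.card_filter, Fin.sum_univ_succ (n := m)]
    rfl
  rcases eq_or_ne w v with rfl | hw
  · simp [hsplit, h, hq.symm]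
  · simp [hsplit, h, hw]

theorem IsRecolSeq.exists_recolorPath {m : ℕ} {φ : Fin (m + 1) → V → ℕ}
    (h : IsRecolSeq G L φ α β) :
    ∃ l, RecolorPath G L α l β ∧ moveCount l = recolorCount φ := by
  induction m generalizing α with
  | zero =>
    obtain ⟨rfl, rfl, -⟩ := h
    exact ⟨[], .nil _, by ext; simp [moveCount, recolorCount]⟩
  | succ m ih =>
    obtain ⟨rfl, -, hstep, htail⟩ := isRecolSeq_succ_iff.1 h
    obtain ⟨v, q, hq, hφ⟩ := existsUnique_ne_iff_exists_update.1 hstep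
    obtain ⟨l, hl, hcount⟩ := ih htail
    have hφ1 : IsLColoring G L (φ 1) := h.2.2.1 1
    have hfree : IsFree G L (φ 0) v q := by
      have hqv : φ 1 v = q := by simp [hφ]
      exact hqv ▸ hφ1.isFree fun w hw => .inl (by simp [hφ, hw.ne'])
    exact ⟨(v, q) :: l, .cons hfree hq (hφ ▸ hl), by
      rw [moveCount_cons, hcount, recolorCount_succ hq hφ]⟩

theorem RecolorPath.exists_isRecolSeq {l : List (V × ℕ)} (h : RecolorPath G L α l β)
    (hα : IsLColoring G L α) :
    ∃ (m : ℕ) (φ : Fin (m + 1) → V → ℕ), IsRecolSeq G L φ α β ∧ recolorCount φ = moveCount l := by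
  induction h with
  | nil α =>
    exact ⟨0, fun _ => α, ⟨rfl, rfl, fun _ => hα, fun i => i.elim0⟩, by
      ext; simp [moveCount, recolorCount]⟩
  | @cons α β v q l hq hne _ ih =>
    obtain ⟨m, φ, hφ, hcount⟩ := ih (hα.update hq)
    have hφ1 : (Fin.cons α φ : Fin (m + 2) → V → ℕ) 1 = update α v q := by simpa using hφ.1
    refine ⟨m + 1, Fin.cons α φ, isRecolSeq_succ_iff.2 ⟨rfl, hα, ?_, ?_⟩, ?_⟩
    · rw [hφ1]
      exact existsUnique_ne_iff_exists_update.2 ⟨v, q, hne, rfl⟩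
    · rwa [hφ1, Fin.tail_cons]
    · rw [recolorCount_succ (v := v) hne hφ1, Fin.tail_cons, hcount, moveCount_cons]

end RecolorPath

section HasCredit

variable {T B s c c' w w' : ℕ} {E : List ℕ}

/-- The amortized budget of a vertex of color `c` whose recolorings have cost `w` so far, where `E`
lists the colors that its neighbors are still going to receive. The credit `t ≤ T` counts the
upcoming colors already known to differ from `c`; the budget `B` pays for the cost and for the
upcoming colors without credit. -/
def HasCredit (T B c w : ℕ) (E : List ℕ) : Prop :=
  ∃ t ≤ T, c ∉ E.take t ∧ w + E.length ≤ B + t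

theorem HasCredit.of_length_le (h : E.length ≤ B) : HasCredit T B c 0 E :=
  ⟨0, T.zero_le, by simp, by omega⟩

theorem HasCredit.cost_le (h : HasCredit T B c w []) : w ≤ B + T := by
  obtain ⟨t, ht, -, hw⟩ := h
  rw [List.length_nil] at hw
  omega

theorem HasCredit.mono {B' : ℕ} (h : HasCredit T B c w E) (hB : B ≤ B') : HasCredit T B' c w E :=
  h.imp fun _ ⟨ht, hc, hw⟩ => ⟨ht, hc, hw.trans (Nat.add_le_add_right hB _)⟩

theorem HasCredit.tail {q : ℕ} (h : HasCredit T B c w (q :: E)) : HasCredit T B c w E := by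
  obtain ⟨t, ht, hc, hw⟩ := h
  rw [List.length_cons] at hw
  rcases t with _ | t
  · exact ⟨0, ht, by simp, by omega⟩
  · exact ⟨t, by omega, fun hmem => hc (by simp [hmem]), by omega⟩

/-- No credit is left when the next upcoming color is the current one, so that all of the new
credit can pay for the recoloring. -/
theorem HasCredit.recharge (h : HasCredit T B c w E) (hc : c ∈ E.take 1) (hs : s ≤ T)
    (hc' : c' ∉ E.take s) (hw' : w' ≤ w + s) : HasCredit T B c' w' E := by
  obtain ⟨t, -, hct, hw⟩ := h
  obtain rfl : t = 0 := by
    by_contra ht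
    exact hct (List.take_subset_take_left E (Nat.one_le_iff_ne_zero.2 ht) hc)
  exact ⟨s, hs, hc', by omega⟩

theorem HasCredit.forfeit (c' n : ℕ) (h : HasCredit T B c w E) :
    HasCredit T (B + n + T) c' (w + n) E := by
  obtain ⟨t, ht, -, hw⟩ := h
  exact ⟨0, T.zero_le, by simp, by omega⟩

end HasCredit

section WithinBudget

variable {V : Type} {d k : ℕ} {a b c : V} {φ N : V → ℕ} {E : V → List ℕ}

/-- The budgets of the center `a` and the ends `b`, `c` of a path, in a coloring `φ` reached by
recoloring each `v` exactly `N v` times, where `E v` lists the colors that the neighbors of `v`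
outside `{a, b, c}` are still going to receive. Each of the first `2 * d + 2` recolorings of an end
counts `d + 1` instead of `d`, but may force a recoloring of the center. -/
structure WithinBudget (d k : ℕ) (a b c : V) (φ N : V → ℕ) (E : V → List ℕ) : Prop where
  center : HasCredit d
    ((d - 1) * k + 2 * d * (min (N b) (2 * d + 2) + min (N c) (2 * d + 2))) (φ a) (d * N a) (E a)
  left : HasCredit (d + 1) (d * k) (φ b) (d * N b + min (N b) (2 * d + 2)) (E b)
  right : HasCredit (d + 1) (d * k) (φ c) (d * N c + min (N c) (2 * d + 2)) (E c)

theorem WithinBudget.swap (h : WithinBudget d k a b c φ N E) : WithinBudget d k a c b φ N E :=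
  ⟨by simpa only [add_comm] using h.center, h.right, h.left⟩

theorem WithinBudget.count_le (hd : 1 ≤ d) (hk : d * (8 * d + 10) ≤ k)
    (hB : WithinBudget d k a b c φ N fun _ => []) : N a + 1 ≤ k ∧ N b + 2 ≤ k ∧ N c + 2 ≤ k := by
  have hend : ∀ n, d * n + min n (2 * d + 2) ≤ d * k + (d + 1) → n + 2 ≤ k := by
    intro n hn
    rcases lt_or_ge n (2 * d + 2) with hlt | hge
    · nlinarith
    · rw [min_eq_right hge] at hn
      have : d * (n + 1) < d * k := by rw [mul_add]; omega
      have := Nat.lt_of_mul_lt_mul_left this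
      omega
  refine ⟨?_, hend _ hB.left.cost_le, hend _ hB.right.cost_le⟩
  have hcost := hB.center.cost_le
  have hbonus : min (N b) (2 * d + 2) + min (N c) (2 * d + 2) ≤ 4 * d + 4 := by omega
  have hdk : (d - 1) * k + k = d * k := by
    rw [← Nat.succ_mul, Nat.succ_eq_add_one, Nat.sub_add_cancel hd]
  refine Nat.le_of_mul_le_mul_left (?_ : d * (N a + 1) ≤ d * k) hd
  calc d * (N a + 1) ≤ (d - 1) * k + 2 * d * (4 * d + 4) + d + d := by
        rw [mul_add, mul_one]
        exact Nat.add_le_add_right (hcost.trans (by gcongr)) d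
    _ = (d - 1) * k + d * (8 * d + 10) := by ring
    _ ≤ d * k := by omega

end WithinBudget

section Upcoming

variable {V : Type} {G : SimpleGraph V} [DecidableRel G.Adj] {S : Set V} {v : V}
  {ms : List (S × ℕ)}

/-- The colors that the neighbors of `v` receive in a list of moves on `S`, in this order. -/
def upcoming (G : SimpleGraph V) [DecidableRel G.Adj] {S : Set V} (l : List (S × ℕ)) (v : V) :
    List ℕ :=
  (l.filter fun m => G.Adj v m.1).map Prod.snd

theorem HasCredit.of_upcoming_cons {T B c w : ℕ} {m : S × ℕ}
    (h : HasCredit T B c w (upcoming G (m :: ms) v)) : HasCredit T B c w (upcoming G ms v) := by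
  by_cases hv : G.Adj v m.1
  · rw [upcoming, List.filter_cons_of_pos (by simpa)] at h
    exact h.tail
  · rwa [upcoming, List.filter_cons_of_neg (by simpa)] at h

theorem length_upcoming_le [DecidableEq V] {k : ℕ} (N : Finset V)
    (hN : ∀ w ∈ S, G.Adj v w → w ∈ N) (hk : ∀ u, moveCount ms u ≤ k) :
    (upcoming G ms v).length ≤ N.card * k := by
  have := Classical.decPred (· ∈ S)
  let moved : Multiset S := ((ms.filter fun m => G.Adj v m.1).map Prod.fst : List S)
  have hmem : ∀ u ∈ moved, u ∈ N.subtype (· ∈ S) := by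
    intro u hu
    simp only [moved, Multiset.mem_coe, List.mem_map, List.mem_filter, decide_eq_true_eq] at hu
    obtain ⟨m, ⟨-, hm⟩, rfl⟩ := hu
    exact Finset.mem_subtype.2 (hN _ m.1.2 hm)
  have hcount : ∀ u, moved.count u ≤ k := fun u =>
    (Multiset.coe_count u _).trans_le ((moveCount_filter_le _ ms u).trans (hk u))
  calc (upcoming G ms v).length = moved.card := by simp [upcoming, moved]
    _ = ∑ u ∈ N.subtype (· ∈ S), moved.count u := (Multiset.sum_count_eq_card hmem).symm
    _ ≤ (N.subtype (· ∈ S)).card * k := Finset.sum_le_card_nsmul _ _ _ fun u _ => hcount u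
    _ ≤ N.card * k := by
      rw [Finset.card_subtype]
      exact Nat.mul_le_mul_right k (Finset.card_filter_le _ _)

end Upcoming

section Extension

variable {V : Type} [DecidableEq V] {G : SimpleGraph V} {L : V → Finset ℕ} {d B : ℕ} {a b c : V}
  {α β φ : V → ℕ} {l : List (V × ℕ)} {e : List ℕ}

theorem RecolorPath.exists_ne_at [Fintype (G.neighborSet a)] (h : RecolorPath G L α l φ)
    (hC : HasCredit d B (φ a) (d * moveCount l a) e) (hL : G.degree a + 1 < (L a).card) (p : ℕ) :
    ∃ l' φ', RecolorPath G L α l' φ' ∧ φ' a ≠ p ∧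
      HasCredit d (B + 2 * d) (φ' a) (d * moveCount l' a) e ∧
      ∀ w, w ≠ a → φ' w = φ w ∧ moveCount l' w = moveCount l w := by
  by_cases hp : φ a = p
  · obtain ⟨r, hr, hrp⟩ := exists_isFree_notMem φ {p} hL
    rw [Finset.mem_singleton] at hrp
    refine ⟨_, _, h.concat hr (hp ▸ hrp), by simpa using hrp, ?_, fun w hw => ?_⟩
    · simpa [moveCount_concat, mul_add, two_mul, add_assoc] using hC.forfeit r d
    · simp [moveCount_concat, hw]
  · exact ⟨l, φ, h, hp, hC.mono (by omega), fun _ _ => ⟨rfl, rfl⟩⟩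

theorem RecolorPath.exists_isFree_ignoring_neighbor [Fintype (G.neighborSet a)]
    [Fintype (G.neighborSet b)] (h : RecolorPath G L α l φ)
    (hC : HasCredit d B (φ a) (d * moveCount l a) e) (hLa : G.degree a + 1 < (L a).card)
    (hLb : G.degree b + d < (L b).card) (hab : G.Adj a b) (e' : List ℕ) :
    ∃ l' φ' p, RecolorPath G L α l' φ' ∧ IsFree G L φ' b p ∧ p ∉ e'.take (d + 1) ∧
      HasCredit d (B + 2 * d) (φ' a) (d * moveCount l' a) e ∧
      ∀ w, w ≠ a → φ' w = φ w ∧ moveCount l' w = moveCount l w := by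
  have hcard : ((G.neighborFinset b).erase a).card + (e'.take (d + 1)).toFinset.card <
      (L b).card := by
    have herase := Finset.card_erase_add_one ((G.mem_neighborFinset b a).2 hab.symm)
    rw [G.card_neighborFinset_eq_degree] at herase
    have htake := card_toFinset_take_le e' (d + 1)
    omega
  obtain ⟨p, hpL, hpe, hp⟩ := exists_mem_list_avoiding φ _ _ hcard
  obtain ⟨l', φ', h', hpa, hC', hoff⟩ := h.exists_ne_at hC hLa p
  refine ⟨l', φ', p, h', ⟨hpL, fun w hw => ?_⟩, by simpa using hpe, hC', hoff⟩
  rcases eq_or_ne w a with rfl | hwa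
  · exact hpa
  · rw [(hoff w hwa).1]
    exact hp w (by simp [hwa, hw])

/-- Move `b` and `c` out of the way of the target color of `a`, and `c` out of the way of the target
color of `b`; then `a`, `b` and `c` can take their target colors in this order. -/
theorem RecolorPath.exists_finish [Fintype (G.neighborSet b)] [Fintype (G.neighborSet c)]
    (h : RecolorPath G L α l φ) (hβ : IsLColoring G L β)
    (hφ : ∀ w ∉ ({a, b, c} : Set V), φ w = β w) (hLb : G.degree b + 1 < (L b).card)
    (hLc : G.degree c + 2 < (L c).card) :
    ∃ l', RecolorPath G L α l' β ∧ moveCount l' ≤ moveCount l + Pi.single b 1 + Pi.single c 1 +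
      Pi.single a 1 + Pi.single b 1 + Pi.single c 1 := by
  obtain ⟨p, hp, hpa⟩ := exists_isFree_notMem φ {β a} hLb
  obtain ⟨r, hr, hrab⟩ := exists_isFree_notMem (update φ b p) {β a, β b}
    ((Nat.add_le_add_left Finset.card_le_two _).trans_lt hLc)
  simp only [Finset.mem_insert, Finset.mem_singleton, not_or] at hpa hrab
  simp only [Set.mem_insert_iff, Set.mem_singleton_iff, not_or] at hφ
  obtain ⟨l₁, h₁, hl₁⟩ := h.exists_recolor hp
  obtain ⟨l₂, h₂, hl₂⟩ := h₁.exists_recolor hr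
  obtain ⟨l₃, h₃, hl₃⟩ := h₂.exists_recolor (hβ.isFree (v := a) fun w _ => by
    grind [update_apply])
  obtain ⟨l₄, h₄, hl₄⟩ := h₃.exists_recolor (hβ.isFree (v := b) fun w _ => by
    grind [update_apply])
  obtain ⟨l₅, h₅, hl₅⟩ := h₄.exists_recolor (hβ.isFree (v := c) fun w _ => by
    grind [update_apply])
  have hend : update (update (update (update (update φ b p) c r) a (β a)) b (β b)) c (β c) = β := by
    grind [update_apply]
  refine ⟨l₅, hend ▸ h₅, ?_⟩
  calc moveCount l₅ ≤ moveCount l₄ + Pi.single c 1 := hl₅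
    _ ≤ moveCount l₃ + Pi.single b 1 + Pi.single c 1 := by gcongr
    _ ≤ moveCount l₂ + Pi.single a 1 + Pi.single b 1 + Pi.single c 1 := by gcongr
    _ ≤ moveCount l₁ + Pi.single c 1 + Pi.single a 1 + Pi.single b 1 + Pi.single c 1 := by gcongr
    _ ≤ _ := by gcongr

end Extension

section ReduciblePath

variable {V : Type} {G : SimpleGraph V} {L : V → Finset ℕ} {d k : ℕ} {a b c : V}
  [Fintype (G.neighborSet a)] [Fintype (G.neighborSet b)] [Fintype (G.neighborSet c)]

/-- The reducible configuration: a path `b a c` of vertices of degree at most `d + 1` with lists of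
at least `2 * d + 2` colors. The ends `b` and `c` may be adjacent. -/
structure IsReduciblePath (G : SimpleGraph V) (L : V → Finset ℕ) (d : ℕ) (a b c : V)
    [Fintype (G.neighborSet a)] [Fintype (G.neighborSet b)] [Fintype (G.neighborSet c)] :
    Prop where
  adj_left : G.Adj a b
  adj_right : G.Adj a c
  left_ne_right : b ≠ c
  degree_center_le : G.degree a ≤ d + 1
  degree_left_le : G.degree b ≤ d + 1
  degree_right_le : G.degree c ≤ d + 1
  le_card_center : 2 * d + 2 ≤ (L a).card
  le_card_left : 2 * d + 2 ≤ (L b).card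
  le_card_right : 2 * d + 2 ≤ (L c).card

namespace IsReduciblePath

theorem swap (hP : IsReduciblePath G L d a b c) : IsReduciblePath G L d a c b where
  adj_left := hP.adj_right
  adj_right := hP.adj_left
  left_ne_right := hP.left_ne_right.symm
  degree_center_le := hP.degree_center_le
  degree_left_le := hP.degree_right_le
  degree_right_le := hP.degree_left_le
  le_card_center := hP.le_card_center
  le_card_left := hP.le_card_right
  le_card_right := hP.le_card_left

theorem degree_center_add_lt (hP : IsReduciblePath G L d a b c) : G.degree a + d < (L a).card := by
  have := hP.degree_center_le
  have := hP.le_card_center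
  omega

theorem degree_left_add_lt (hP : IsReduciblePath G L d a b c) : G.degree b + d < (L b).card := by
  have := hP.degree_left_le
  have := hP.le_card_left
  omega

variable [DecidableEq V] {α β φ : V → ℕ} {E : V → List ℕ} {l : List (V × ℕ)}

theorem exists_center_not_next (hP : IsReduciblePath G L d a b c) (hd : 1 ≤ d)
    (h : RecolorPath G L α l φ) (hB : WithinBudget d k a b c φ (moveCount l) E) :
    ∃ l' φ', RecolorPath G L α l' φ' ∧ WithinBudget d k a b c φ' (moveCount l') E ∧
      (∀ w, w ≠ a → φ' w = φ w ∧ moveCount l' w = moveCount l w) ∧ φ' a ∉ (E a).take 1 := by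
  by_cases hnext : φ a ∈ (E a).take 1
  · obtain ⟨p, hp, hpE⟩ := exists_isFree_notMem_take φ (E a) hP.degree_center_add_lt
    have hp1 : p ∉ (E a).take 1 := fun hmem => hpE (List.take_subset_take_left _ hd hmem)
    have hba := hP.adj_left.ne'
    have hca := hP.adj_right.ne'
    refine ⟨_, _, h.concat hp (fun e => hp1 (e ▸ hnext)), ⟨?_, ?_, ?_⟩, fun w hw => ?_, by simpa⟩
    · simpa [moveCount_concat, hba, hca] using
        hB.center.recharge hnext le_rfl hpE (Nat.mul_succ d _).le
    · simpa [moveCount_concat, hba] using hB.left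
    · simpa [moveCount_concat, hca] using hB.right
    · simp [moveCount_concat, hw]
  · exact ⟨l, φ, h, hB, fun _ _ => ⟨rfl, rfl⟩, hnext⟩

theorem exists_left_not_next_of_count_lt (hP : IsReduciblePath G L d a b c) (hd : 1 ≤ d)
    (h : RecolorPath G L α l φ) (hB : WithinBudget d k a b c φ (moveCount l) E)
    (hnext : φ b ∈ (E b).take 1) (hfew : moveCount l b < 2 * d + 2) :
    ∃ l' φ', RecolorPath G L α l' φ' ∧ WithinBudget d k a b c φ' (moveCount l') E ∧
      (∀ w, w ≠ a → w ≠ b → φ' w = φ w ∧ moveCount l' w = moveCount l w) ∧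
      φ' b ∉ (E b).take 1 := by
  have hab := hP.adj_left.ne
  have hcb := hP.left_ne_right.symm
  have hLa : G.degree a + 1 < (L a).card :=
    (Nat.add_le_add_left hd _).trans_lt hP.degree_center_add_lt
  obtain ⟨l₁, φ₁, p, h₁, hp, hpE, hcenter, hoff⟩ :=
    h.exists_isFree_ignoring_neighbor hB.center hLa hP.degree_left_add_lt hP.adj_left (E b)
  have hp1 : p ∉ (E b).take 1 := fun hmem => hpE (List.take_subset_take_left _ (by omega) hmem)
  have hb := hoff b hab.symm
  have hc := hoff c hP.adj_right.ne'
  refine ⟨_, _, h₁.concat hp (fun e => hp1 (by rwa [e, hb.1])), ⟨?_, ?_, ?_⟩,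
    fun w hwa hwb => ?_, by simpa⟩
  · simp only [moveCount_concat, Pi.add_apply, update_of_ne hab, Pi.single_eq_of_ne hab,
      Pi.single_eq_same, Pi.single_eq_of_ne hcb, hb.2, hc.2, add_zero]
    rw [Nat.min_eq_left hfew.le] at hcenter
    rw [Nat.min_eq_left (by omega)]
    exact hcenter.mono (by ring_nf; omega)
  · simp only [moveCount_concat, Pi.add_apply, update_self, Pi.single_eq_same, hb.2]
    exact hB.left.recharge hnext le_rfl hpE (by rw [mul_add]; omega)
  · simpa [moveCount_concat, hcb, hc] using hB.right
  · simp [moveCount_concat, hwb, hoff w hwa]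

theorem exists_left_not_next_of_le_count (hP : IsReduciblePath G L d a b c) (hd : 1 ≤ d)
    (h : RecolorPath G L α l φ) (hB : WithinBudget d k a b c φ (moveCount l) E)
    (hnext : φ b ∈ (E b).take 1) (hmany : 2 * d + 2 ≤ moveCount l b) :
    ∃ l' φ', RecolorPath G L α l' φ' ∧ WithinBudget d k a b c φ' (moveCount l') E ∧
      (∀ w, w ≠ b → φ' w = φ w ∧ moveCount l' w = moveCount l w) ∧ φ' b ∉ (E b).take 1 := by
  obtain ⟨p, hp, hpE⟩ := exists_isFree_notMem_take φ (E b) hP.degree_left_add_lt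
  have hp1 : p ∉ (E b).take 1 := fun hmem => hpE (List.take_subset_take_left _ hd hmem)
  have hcb := hP.left_ne_right.symm
  refine ⟨_, _, h.concat hp (fun e => hp1 (e ▸ hnext)), ⟨?_, ?_, ?_⟩, fun w hw => ?_, by simpa⟩
  · simpa [moveCount_concat, hP.adj_left.ne, hcb, hmany.trans (Nat.le_succ _), hmany] using
      hB.center
  · simp only [moveCount_concat, Pi.add_apply, update_self, Pi.single_eq_same]
    exact hB.left.recharge hnext (by omega) hpE (by rw [mul_add]; omega)
  · simpa [moveCount_concat, hcb] using hB.right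
  · simp [moveCount_concat, hw]

theorem exists_left_not_next (hP : IsReduciblePath G L d a b c) (hd : 1 ≤ d)
    (h : RecolorPath G L α l φ) (hB : WithinBudget d k a b c φ (moveCount l) E) :
    ∃ l' φ', RecolorPath G L α l' φ' ∧ WithinBudget d k a b c φ' (moveCount l') E ∧
      (∀ w, w ≠ a → w ≠ b → φ' w = φ w ∧ moveCount l' w = moveCount l w) ∧
      φ' b ∉ (E b).take 1 := by
  by_cases hnext : φ b ∈ (E b).take 1
  · rcases lt_or_ge (moveCount l b) (2 * d + 2) with hfew | hmany
    · exact hP.exists_left_not_next_of_count_lt hd h hB hnext hfew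
    · obtain ⟨l', φ', h', hB', hoff, hb⟩ := hP.exists_left_not_next_of_le_count hd h hB hnext hmany
      exact ⟨l', φ', h', hB', fun w _ => hoff w, hb⟩
  · exact ⟨l, φ, h, hB, fun _ _ _ => ⟨rfl, rfl⟩, hnext⟩

theorem exists_not_next (hP : IsReduciblePath G L d a b c) (hd : 1 ≤ d)
    (h : RecolorPath G L α l φ) (hB : WithinBudget d k a b c φ (moveCount l) E) :
    ∃ l' φ', RecolorPath G L α l' φ' ∧ WithinBudget d k a b c φ' (moveCount l') E ∧
      (∀ w ∉ ({a, b, c} : Set V), φ' w = φ w ∧ moveCount l' w = moveCount l w) ∧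
      ∀ v ∈ ({a, b, c} : Set V), φ' v ∉ (E v).take 1 := by
  obtain ⟨l₁, φ₁, h₁, hB₁, hoff₁, hb⟩ := hP.exists_left_not_next hd h hB
  obtain ⟨l₂, φ₂, h₂, hB₂, hoff₂, hc⟩ := hP.swap.exists_left_not_next hd h₁ hB₁.swap
  obtain ⟨l₃, φ₃, h₃, hB₃, hoff₃, ha⟩ := hP.exists_center_not_next hd h₂ hB₂.swap
  refine ⟨l₃, φ₃, h₃, hB₃, fun w hw => ?_, ?_⟩
  · simp only [Set.mem_insert_iff, Set.mem_singleton_iff, not_or] at hw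
    obtain ⟨hwa, hwb, hwc⟩ := hw
    rw [(hoff₃ w hwa).1, (hoff₃ w hwa).2, (hoff₂ w hwa hwc).1, (hoff₂ w hwa hwc).2]
    exact hoff₁ w hwa hwb
  · rintro v (rfl | rfl | rfl)
    · exact ha
    · rwa [(hoff₃ v hP.adj_left.ne').1, (hoff₂ v hP.adj_left.ne' hP.left_ne_right).1]
    · rwa [(hoff₃ v hP.adj_right.ne').1]

variable [DecidableRel G.Adj]

theorem length_upcoming_center_le (hP : IsReduciblePath G L d a b c) {S : Set V}
    {ms : List (S × ℕ)} (hb : b ∉ S) (hc : c ∉ S) (hk : ∀ u, moveCount ms u ≤ k) :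
    (upcoming G ms a).length ≤ (d - 1) * k := by
  refine (length_upcoming_le (((G.neighborFinset a).erase b).erase c) ?_ hk).trans ?_
  · intro w hw haw
    simpa [haw] using ⟨ne_of_mem_of_not_mem hw hc, ne_of_mem_of_not_mem hw hb⟩
  · have := hP.degree_center_le
    rw [Finset.card_erase_of_mem (by simpa using ⟨hP.left_ne_right.symm, hP.adj_right⟩),
      Finset.card_erase_of_mem (by simpa using hP.adj_left), G.card_neighborFinset_eq_degree]
    exact Nat.mul_le_mul_right k (by omega)

theorem length_upcoming_left_le (hP : IsReduciblePath G L d a b c) {S : Set V}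
    {ms : List (S × ℕ)} (ha : a ∉ S) (hk : ∀ u, moveCount ms u ≤ k) :
    (upcoming G ms b).length ≤ d * k := by
  refine (length_upcoming_le ((G.neighborFinset b).erase a) ?_ hk).trans ?_
  · intro w hw hbw
    simpa [hbw] using ne_of_mem_of_not_mem hw ha
  · have := hP.degree_left_le
    rw [Finset.card_erase_of_mem (by simpa using hP.adj_left.symm),
      G.card_neighborFinset_eq_degree]
    exact Nat.mul_le_mul_right k (by omega)

variable {χ χ' : ↥({a, b, c}ᶜ : Set V) → ℕ}
  {ms : List (↥({a, b, c}ᶜ : Set V) × ℕ)}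

theorem withinBudget_zero (hP : IsReduciblePath G L d a b c) (hk : ∀ u, moveCount ms u ≤ k)
    (φ : V → ℕ) : WithinBudget d k a b c φ 0 (upcoming G ms) where
  center := .of_length_le (by simpa using hP.length_upcoming_center_le (by simp) (by simp) hk)
  left := .of_length_le (hP.length_upcoming_left_le (by simp) hk)
  right := .of_length_le (hP.swap.length_upcoming_left_le (by simp) hk)

theorem exists_extension_cons (hP : IsReduciblePath G L d a b c) (hd : 1 ≤ d)
    {x : ↥({a, b, c}ᶜ : Set V)} {q : ℕ}
    (hq : IsFree (G.induce {a, b, c}ᶜ) (fun u => L u) χ x q) (hne : q ≠ χ x)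
    (h : RecolorPath G L α l φ) (hφ : ∀ u : ↥({a, b, c}ᶜ : Set V), φ u = χ u)
    (hB : WithinBudget d k a b c φ (moveCount l) (upcoming G ((x, q) :: ms))) :
    ∃ l' φ', RecolorPath G L α l' φ' ∧
      WithinBudget d k a b c φ' (moveCount l') (upcoming G ms) ∧
      ∀ u : ↥({a, b, c}ᶜ : Set V), φ' u = update χ x q u ∧
        moveCount l' u = moveCount l u + (Pi.single x 1 : _ → ℕ) u := by
  obtain ⟨l₁, φ₁, h₁, hB₁, hoff, havoid⟩ := hP.exists_not_next hd h hB
  have hφ₁ : ∀ u : ↥({a, b, c}ᶜ : Set V), φ₁ u = χ u := fun u => (hoff u u.2).1.trans (hφ u)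
  have hfree : IsFree G L φ₁ x q := by
    refine ⟨hq.1, fun w hw => ?_⟩
    by_cases hwS : w ∈ ({a, b, c} : Set V)
    · have hw₁ := havoid w hwS
      rw [upcoming, List.filter_cons_of_pos (by simpa using hw.symm)] at hw₁
      simpa using hw₁
    · exact hφ₁ ⟨w, hwS⟩ ▸ hq.2 ⟨w, hwS⟩ hw
  have hax : a ≠ x := fun e => x.2 (by simp [← e])
  have hbx : b ≠ x := fun e => x.2 (by simp [← e])
  have hcx : c ≠ x := fun e => x.2 (by simp [← e])
  refine ⟨_, _, h₁.concat hfree (by rwa [hφ₁]), ⟨?_, ?_, ?_⟩, fun u => ?_⟩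
  · simpa [moveCount_concat, hax, hbx, hcx] using hB₁.center.of_upcoming_cons
  · simpa [moveCount_concat, hbx] using hB₁.left.of_upcoming_cons
  · simpa [moveCount_concat, hcx] using hB₁.right.of_upcoming_cons
  · rw [moveCount_concat, Pi.add_apply, (hoff u u.2).2]
    rcases eq_or_ne u x with rfl | hux
    · simp
    · simp [hux, Subtype.coe_ne_coe.2 hux, hφ₁]

theorem exists_extension (hP : IsReduciblePath G L d a b c) (hd : 1 ≤ d)
    (hms : RecolorPath (G.induce {a, b, c}ᶜ) (fun u => L u) χ ms χ')
    (h : RecolorPath G L α l φ) (hφ : ∀ u : ↥({a, b, c}ᶜ : Set V), φ u = χ u)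
    (hB : WithinBudget d k a b c φ (moveCount l) (upcoming G ms)) :
    ∃ l' φ', RecolorPath G L α l' φ' ∧ WithinBudget d k a b c φ' (moveCount l') (fun _ => []) ∧
      ∀ u : ↥({a, b, c}ᶜ : Set V), φ' u = χ' u ∧
        moveCount l' u = moveCount l u + moveCount ms u := by
  induction hms generalizing l φ with
  | nil χ => exact ⟨l, φ, h, hB, fun u => ⟨hφ u, rfl⟩⟩
  | cons hq hne _ ih =>
    obtain ⟨l₁, φ₁, h₁, hB₁, hoff₁⟩ := hP.exists_extension_cons hd hq hne h hφ hB
    obtain ⟨l₂, φ₂, h₂, hB₂, hoff₂⟩ := ih h₁ (fun u => (hoff₁ u).1) hB₁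
    refine ⟨l₂, φ₂, h₂, hB₂, fun u => ⟨(hoff₂ u).1, ?_⟩⟩
    rw [(hoff₂ u).2, (hoff₁ u).2, moveCount_cons, Pi.add_apply, add_assoc]

end IsReduciblePath

theorem stmt_6_general (hP : IsReduciblePath G L d a b c) (hd : 2 ≤ d)
    (hk : d * (8 * d + 10) ≤ k) {α β : V → ℕ} (hα : IsLColoring G L α) (hβ : IsLColoring G L β)
    (hrec : ∃ (m : ℕ) (φ : Fin (m + 1) → ↥({a, b, c}ᶜ : Set V) → ℕ),
      IsRecolSeq (G.induce {a, b, c}ᶜ) (fun u => L u) φ (fun u => α u) (fun u => β u) ∧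
      ∀ u, recolorCount φ u ≤ k) :
    ∃ (M : ℕ) (ψ : Fin (M + 1) → V → ℕ), IsRecolSeq G L ψ α β ∧ ∀ u, recolorCount ψ u ≤ k := by
  classical
  obtain ⟨m, χ, hχ, hχk⟩ := hrec
  obtain ⟨ms, hms, hcount⟩ := hχ.exists_recolorPath
  have hmsk : ∀ u, moveCount ms u ≤ k := hcount ▸ hχk
  obtain ⟨l, φ, hl, hB, hoff⟩ := hP.exists_extension (by omega) hms (.nil α) (fun _ => rfl)
    (hP.withinBudget_zero hmsk α)
  have hlb := hP.degree_left_add_lt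
  have hlc := hP.swap.degree_left_add_lt
  obtain ⟨l', hl', hle⟩ := hl.exists_finish (a := a) hβ (fun w hw => (hoff ⟨w, hw⟩).1)
    (by omega) (by omega)
  obtain ⟨M, ψ, hψ, hψl⟩ := hl'.exists_isRecolSeq hα
  refine ⟨M, ψ, hψ, fun u => hψl ▸ (hle u).trans ?_⟩
  obtain ⟨ha, hb, hc⟩ := hB.count_le (by omega) hk
  by_cases hu : u ∈ ({a, b, c} : Set V)
  · have hab := hP.adj_left.ne
    have hac := hP.adj_right.ne
    have hbc := hP.left_ne_right
    rcases hu with rfl | rfl | rfl <;>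
      simp [hab, hab.symm, hac, hac.symm, hbc, hbc.symm] <;> omega
  · have hu' := hu
    simp only [Set.mem_insert_iff, Set.mem_singleton_iff, not_or] at hu'
    have hlu : moveCount l u = moveCount ms ⟨u, hu⟩ := (hoff ⟨u, hu⟩).2.trans (zero_add _)
    simpa [hu', hlu] using hmsk ⟨u, hu⟩

end ReduciblePath

/-- a 5-vertex with two 5-neighbors (RC(a)): if `G` contains this configuration and `G − S` has a
`k`-good recoloring sequence between the restrictions of `α` and `β` (`k ≥ 416`),
then `G` has a `k`-good recoloring sequence from `α` to `β`. -/
theorem stmt_6 {V : Type} [Fintype V] [DecidableEq V]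
    (G : SimpleGraph V) [DecidableRel G.Adj]
    (k : ℕ) (hk : 416 ≤ k)
    (L : V → Finset ℕ) (hL : ∀ u, (L u).card = 10)
    (α β : V → ℕ) (hα : IsLColoring G L α) (hβ : IsLColoring G L β)
    (a b c : V) (hnodup : ([a, b, c] : List V).Nodup)
    (he1: G.Adj a b)
    (he2: G.Adj a c)
    (hda : G.degree a = 5)
    (hdb : G.degree b = 5)
    (hdc : G.degree c = 5)
    (S : Set V) (hS : S = {a, b, c})
    (hrec : ∃ (m : ℕ) (φ : Fin (m + 1) → ↥(Sᶜ) → ℕ),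
      IsRecolSeq (G.induce Sᶜ) (fun u => L u.1) φ (fun u => α u.1) (fun u => β u.1) ∧
      ∀ u : ↥(Sᶜ), recolorCount φ u ≤ k) :
    ∃ (M : ℕ) (ψ : Fin (M + 1) → V → ℕ),
      IsRecolSeq G L ψ α β ∧ ∀ u : V, recolorCount ψ u ≤ k := by
  subst hS
  have hbc : b ≠ c := by rintro rfl; simp at hnodup
  exact stmt_6_general (d := 4)
    ⟨he1, he2, hbc, hda.le, hdb.le, hdc.le, (hL a).ge, (hL b).ge, (hL c).ge⟩
    (by norm_num) (by omega) hα hβ hrec
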